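/- Let ℘ be the Weierstrass ℘-function of the square lattice L = [1, i] and β(t) = 1/3 + it, t ∈ [0,1]. Then ∫_β ℘(z) dz = iπ. -/

import Mathlib

/-!
The proof sums the Eisenstein-type series for `℘` over square boxes. Write `c = 1/3`.

* The series `∑ (1 / (z - l)² - 1 / l²)` converges normally on the segment `β`, since its terms are
  `O(|l|⁻³)`; hence it may be integrated term by term, and the resulting sum may be evaluated as the
  limit of its partial sums over the boxes `|m|, |n| ≤ N` (`summable_norm_wpTerm`, `tendsto_box`).
* On each box the constants `1 / l²` cancel, because multiplication by `i` preserves the box and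
  changes their sign (`sum_box_inv_sq`).
* The remaining terms integrate to `1 / (c - l) - 1 / (c - l + i)`, which telescopes along
  each column (`sum_box_integral`) and leaves
  `∑_{|m| ≤ N} (1 / (c - m - Ni) - 1 / (c - m + (N + 1)i))`.
* Up to an error `O(1/N)`, this is `∫ 2Ni / (x² + N²) dx` over `[-N, N + 1]`, which is
  `2i (arctan (1 + 1/N) + π/4)` and tends to `iπ` (`tendsto_boundary_sum`).
-/

open Complex

/-- A lattice point of the unit square lattice `L = ℤ + ℤi`. -/
noncomputable def latticePt (p : ℤ × ℤ) : ℂ := (p.1 : ℂ) + (p.2 : ℂ) * Complex.I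

/-- The unit square lattice `L = ℤ + ℤi` as a subset of `ℂ`. -/
def squareLattice : Set ℂ := {z | ∃ m n : ℤ, z = (m : ℂ) + (n : ℂ) * Complex.I}

/-- The Weierstrass ℘-function of the square lattice `L = ℤ + ℤi`. -/
noncomputable def wp (z : ℂ) : ℂ :=
  1 / z ^ 2 + ∑' p : {p : ℤ × ℤ // p ≠ 0},
    (1 / (z - latticePt p.1) ^ 2 - 1 / (latticePt p.1) ^ 2)

/-- The Weierstrass ζ-function of the square lattice `L = ℤ + ℤi`. -/
noncomputable def wzeta (z : ℂ) : ℂ :=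
  1 / z + ∑' p : {p : ℤ × ℤ // p ≠ 0},
    (1 / (z - latticePt p.1) + 1 / latticePt p.1 + z / (latticePt p.1) ^ 2)

/-- The invariant `g₂ = 60 Σ' Ω⁻⁴` of the square lattice. -/
noncomputable def g2 : ℂ := 60 * ∑' p : {p : ℤ × ℤ // p ≠ 0}, (latticePt p.1) ^ (-4 : ℤ)

/-- The invariant `g₃ = 140 Σ' Ω⁻⁶` of the square lattice. -/
noncomputable def g3 : ℂ := 140 * ∑' p : {p : ℤ × ℤ // p ≠ 0}, (latticePt p.1) ^ (-6 : ℤ)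

open Filter Topology

/-- The period pair `(1, i)`, spanning the square lattice. -/
noncomputable def squarePeriods : PeriodPair where
  ω₁ := 1
  ω₂ := I
  indep := by
    rw [LinearIndependent.pair_iff]
    intro s t h
    have h1 := congrArg Complex.re h
    have h2 := congrArg Complex.im h
    simp at h1 h2
    exact ⟨h1, h2⟩

lemma latticeEquivProd_symm_eq (p : ℤ × ℤ) :
    ((squarePeriods.latticeEquivProd.symm p : squarePeriods.lattice) : ℂ) = latticePt p := by
  rw [PeriodPair.latticeEquiv_symm_apply]
  simp [squarePeriods, latticePt]

lemma summable_norm_latticePt : Summable fun p : ℤ × ℤ ↦ ‖latticePt p‖ ^ (-3 : ℝ) := by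
  have h : Summable fun l : squarePeriods.lattice ↦ ‖l‖ ^ (-3 : ℝ) :=
    ZLattice.summable_norm_rpow _ _ (by simp; norm_num)
  have h2 := h.comp_injective squarePeriods.latticeEquivProd.symm.injective
  refine h2.congr fun p ↦ ?_
  simp only [Function.comp, ← latticeEquivProd_symm_eq, Submodule.coe_norm]

lemma eventually_le_norm_latticePt (R : ℝ) : ∀ᶠ p : ℤ × ℤ in cofinite, R ≤ ‖latticePt p‖ := by
  have h : (Metric.closedBall (0 : squarePeriods.lattice) R).Finite :=
    isCompact_iff_finite.mp (isCompact_closedBall _ R)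
  refine (h.preimage squarePeriods.latticeEquivProd.symm.injective.injOn).subset fun p hp ↦ ?_
  have hp' : ¬ R ≤ ‖latticePt p‖ := hp
  rw [← latticeEquivProd_symm_eq] at hp'
  simpa using (not_le.mp hp').le

/-- The vertical line `Re z = 1/3` misses the lattice. -/
lemma third_add_sub_ne_zero (p : ℤ × ℤ) (t : ℝ) : 1 / 3 + t * I - latticePt p ≠ 0 := by
  intro h
  have h1 := congrArg Complex.re h
  simp [latticePt] at h1
  have h2 : (3 * p.1 : ℝ) = 1 := by linarith
  have h3 : 3 * p.1 = 1 := by exact_mod_cast h2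
  omega

/-- The `p`-th term of the integrand along `β`. Because `1 / 0 = 0`, the term at `p = 0` is the
principal part `1 / z ^ 2`, so these terms indexed by all of `ℤ × ℤ` sum to `℘(z) i`. -/
noncomputable def wpTerm (p : ℤ × ℤ) : C(ℝ, ℂ) where
  toFun t := (1 / (1 / 3 + t * I - latticePt p) ^ 2 - 1 / (latticePt p) ^ 2) * I
  continuous_toFun := by
    have h (t : ℝ) := pow_ne_zero 2 (third_add_sub_ne_zero p t)
    fun_prop (disch := exact h _)

lemma norm_beta_lt {t : ℝ} (ht : t ∈ Set.uIcc (0 : ℝ) 1) : ‖(1 / 3 + t * I : ℂ)‖ < 2 := by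
  rw [Set.uIcc_of_le zero_le_one] at ht
  calc ‖(1 / 3 + t * I : ℂ)‖ ≤ ‖(1 / 3 : ℂ)‖ + ‖(t * I : ℂ)‖ := norm_add_le _ _
    _ = 1 / 3 + |t| := by simp
    _ < 2 := by rw [abs_of_nonneg ht.1]; linarith [ht.2]

lemma summable_norm_wpTerm : Summable fun p ↦
    ‖(wpTerm p).restrict (⟨Set.uIcc 0 1, isCompact_uIcc⟩ : TopologicalSpace.Compacts ℝ)‖ := by
  refine Summable.of_norm_bounded_eventually (summable_norm_latticePt.mul_left (10 * 2)) ?_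
  filter_upwards [eventually_le_norm_latticePt (2 * 2)] with p hp
  rw [norm_norm, ContinuousMap.norm_le _ (by positivity)]
  rintro ⟨t, ht⟩
  simpa [wpTerm] using
    PeriodPair.weierstrassP_bound 2 two_pos (1 / 3 + t * I) (norm_beta_lt ht) (latticePt p) hp

lemma tsum_wpTerm {t : ℝ} (ht : t ∈ Set.uIcc (0 : ℝ) 1) :
    ∑' p, wpTerm p t = wp (1 / 3 + t * I) * I := by
  have hs : Summable fun p ↦ wpTerm p t := by
    refine Summable.of_norm_bounded summable_norm_wpTerm fun p ↦ ?_
    exact ((wpTerm p).restrict (⟨Set.uIcc 0 1, isCompact_uIcc⟩ :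
      TopologicalSpace.Compacts ℝ)).norm_coe_le_norm ⟨t, ht⟩
  rw [← hs.tsum_subtype_add_tsum_subtype_compl {0}]
  have h0 : latticePt 0 = 0 := by simp [latticePt]
  rw [tsum_singleton (0 : ℤ × ℤ) (fun p ↦ wpTerm p t), wp, add_mul, ← tsum_mul_right]
  congr 1
  simp [wpTerm, h0]

/-- Fundamental theorem of calculus for a single term. -/
lemma integral_wpTerm (m n : ℤ) :
    ∫ t in (0 : ℝ)..1, wpTerm (m, n) t =
      (1 / (1 / 3 - m - n * I) - 1 / (1 / 3 - m - (n - 1) * I)) - 1 / latticePt (m, n) ^ 2 * I := by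
  have hd (t : ℝ) (_ : t ∈ Set.uIcc (0 : ℝ) 1) : HasDerivAt
      (fun t : ℝ ↦ -(1 / 3 + t * I - latticePt (m, n))⁻¹ - 1 / latticePt (m, n) ^ 2 * I * t)
      (wpTerm (m, n) t) t := by
    have h1 : HasDerivAt (fun t : ℝ ↦ (1 / 3 + t * I - latticePt (m, n) : ℂ)) I t := by
      simpa using ((ofRealCLM.hasDerivAt (x := t)).mul_const I).const_add (1 / 3 : ℂ)
        |>.sub_const (latticePt (m, n))
    have h2 : HasDerivAt (fun t : ℝ ↦ (1 / latticePt (m, n) ^ 2 * I * t : ℂ))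
        (1 / latticePt (m, n) ^ 2 * I) t := by
      simpa only [ofRealCLM_apply, ofReal_one, mul_one] using
        (ofRealCLM.hasDerivAt (x := t)).const_mul (1 / latticePt (m, n) ^ 2 * I)
    refine ((h1.fun_inv (third_add_sub_ne_zero _ t)).fun_neg.fun_sub h2).congr_deriv ?_
    simp only [wpTerm, ContinuousMap.coe_mk]
    ring
  rw [intervalIntegral.integral_eq_sub_of_hasDerivAt hd
    ((wpTerm (m, n)).continuous.intervalIntegrable _ _)]
  simp only [latticePt, ofReal_one, ofReal_zero]
  rw [show (1 / 3 - m - (n - 1) * I : ℂ) = 1 / 3 + 1 * I - (m + n * I) by ring,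
    show (1 / 3 - m - n * I : ℂ) = 1 / 3 + 0 * I - (m + n * I) by ring]
  ring

/-- The square box of side `2N` in `ℤ × ℤ`. -/
noncomputable def box (N : ℕ) : Finset (ℤ × ℤ) := Finset.Icc (-N : ℤ) N ×ˢ Finset.Icc (-N : ℤ) N

lemma tendsto_box : Tendsto box atTop atTop := by
  refine tendsto_atTop_finset_of_monotone (fun M N h p ↦ ?_) fun p ↦
    ⟨p.1.natAbs + p.2.natAbs, ?_⟩
  · simp only [box, Finset.mem_product, Finset.mem_Icc]
    omega
  · simp only [box, Finset.mem_product, Finset.mem_Icc]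
    omega

/-- Multiplication by `i` preserves the box and changes the sign of each `l⁻²`. -/
lemma sum_box_inv_sq (N : ℕ) : ∑ p ∈ box N, 1 / latticePt p ^ 2 = 0 := by
  have h : ∑ p ∈ box N, 1 / latticePt p ^ 2 = ∑ p ∈ box N, -(1 / latticePt p ^ 2) := by
    refine Finset.sum_nbij' (fun p ↦ (-p.2, p.1)) (fun p ↦ (p.2, -p.1)) ?_ ?_ ?_ ?_ ?_
    · simp only [box, Finset.mem_product, Finset.mem_Icc]
      omega
    · simp only [box, Finset.mem_product, Finset.mem_Icc]
      omega
    · simp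
    · simp
    · intro p _
      have : latticePt (-p.2, p.1) = I * latticePt p := by
        simp only [latticePt, Int.cast_neg]
        linear_combination -(p.2 : ℂ) * I_sq
      rw [this, mul_pow, I_sq]
      simp
  rw [Finset.sum_neg_distrib] at h
  exact CharZero.eq_neg_self_iff.mp h

lemma sum_Icc_eq_sum_range (f : ℤ → ℂ) (N : ℕ) :
    ∑ n ∈ Finset.Icc (-N : ℤ) N, f n = ∑ k ∈ Finset.range (2 * N + 1), f (k - N) := by
  symm
  refine Finset.sum_nbij' (fun k : ℕ ↦ (k : ℤ) - N) (fun n ↦ (n + N).toNat) ?_ ?_ ?_ ?_ ?_ <;>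
    simp only [Finset.mem_Icc, Finset.mem_range] <;> intros <;> first | omega | trivial

/-- Summed over a column of the box, the integrals telescope. -/
lemma sum_box_integral (N : ℕ) :
    ∑ p ∈ box N, ∫ t in (0 : ℝ)..1, wpTerm p t =
      ∑ k ∈ Finset.range (2 * N + 1),
        (1 / (1 / 3 - (k - N) - N * I) - 1 / (1 / 3 - (k - N) + (N + 1) * I)) := by
  have h1 : ∑ p ∈ box N, ∫ t in (0 : ℝ)..1, wpTerm p t = ∑ p ∈ box N,
      (1 / (1 / 3 - p.1 - p.2 * I) - 1 / (1 / 3 - p.1 - (p.2 - 1) * I) : ℂ) := by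
    have h := sum_box_inv_sq N
    simp_rw [fun p : ℤ × ℤ ↦ integral_wpTerm p.1 p.2]
    rw [Finset.sum_sub_distrib, ← Finset.sum_mul, h, zero_mul, sub_zero]
  rw [h1, box, Finset.sum_product, sum_Icc_eq_sum_range]
  refine Finset.sum_congr rfl fun k _ ↦ ?_
  rw [sum_Icc_eq_sum_range]
  have h2 := Finset.sum_range_sub
    (fun j : ℕ ↦ (1 / (1 / 3 - (k - N) - (j - 1 - N) * I) : ℂ)) (2 * N + 1)
  convert h2 using 1
  · refine Finset.sum_congr rfl fun j _ ↦ ?_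
    push_cast
    congr 3 <;> ring
  · push_cast
    congr 3 <;> ring

lemma norm_one_div_sub_one_div_le {u v : ℂ} {N C : ℝ} (hN : 0 < N) (hu : N ≤ ‖u‖) (hv : N ≤ ‖v‖)
    (h : ‖v - u‖ ≤ C) : ‖1 / u - 1 / v‖ ≤ C / N ^ 2 := by
  have hu0 : u ≠ 0 := norm_pos_iff.mp (hN.trans_le hu)
  have hv0 : v ≠ 0 := norm_pos_iff.mp (hN.trans_le hv)
  rw [div_sub_div _ _ hu0 hv0, norm_div, norm_mul, one_mul, mul_one, sq]
  gcongr
  exact (norm_nonneg _).trans h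

/-- A term of the boundary sum is a value of the kernel `2N / (x² + N²)`, up to `O(N⁻²)`. -/
lemma norm_boundary_sub_le (N : ℕ) (hN : 0 < N) (m x : ℝ) (hx : x ∈ Set.Ioc m (m + 1)) :
    ‖(1 / (1 / 3 - m - N * I) - 1 / (1 / 3 - m + (N + 1) * I) : ℂ) -
      ((2 * N / (x ^ 2 + N ^ 2) : ℝ) : ℂ) * I‖ ≤ 5 / (N : ℝ) ^ 2 := by
  have hN' : (0 : ℝ) < N := by exact_mod_cast hN
  have hu : (N : ℝ) ≤ ‖(1 / 3 - m - N * I : ℂ)‖ := by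
    refine le_trans ?_ (abs_im_le_norm _); simp
  have hv : (N : ℝ) ≤ ‖(1 / 3 - m + (N + 1) * I : ℂ)‖ := by
    refine le_trans ?_ (abs_im_le_norm _)
    refine le_trans ?_ (le_abs_self _); simp
  have hu' : (N : ℝ) ≤ ‖(-x - N * I : ℂ)‖ := by
    refine le_trans ?_ (abs_im_le_norm _); simp
  have hv' : (N : ℝ) ≤ ‖(-x + N * I : ℂ)‖ := by
    refine le_trans ?_ (abs_im_le_norm _); simp
  have hk : (((2 * N / (x ^ 2 + N ^ 2) : ℝ) : ℂ) * I) = 1 / (-x - N * I) - 1 / (-x + N * I) := by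
    have h1 : (-x - N * I : ℂ) ≠ 0 := norm_pos_iff.mp (hN'.trans_le hu')
    have h2 : (-x + N * I : ℂ) ≠ 0 := norm_pos_iff.mp (hN'.trans_le hv')
    have h3 : (x ^ 2 + N ^ 2 : ℂ) = (-x - N * I) * (-x + N * I) := by
      linear_combination (N : ℂ) ^ 2 * I_sq
    push_cast
    rw [h3]
    field_simp
    ring
  have hd : ‖((m - x - 1 / 3 : ℝ) : ℂ)‖ ≤ 2 := by
    rw [norm_real, Real.norm_eq_abs, abs_le]
    constructor <;> linarith [hx.1, hx.2]
  have b1 := norm_one_div_sub_one_div_le hN' hu hu' (C := 2) (by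
    convert hd using 2; push_cast; ring)
  have b2 := norm_one_div_sub_one_div_le hN' hv hv' (C := 3) (by
    have : (-x + N * I - (1 / 3 - m + (N + 1) * I) : ℂ) = ((m - x - 1 / 3 : ℝ) : ℂ) - I := by
      push_cast; ring
    rw [this]
    refine (norm_sub_le _ _).trans ?_
    rw [norm_I]; linarith)
  rw [hk, sub_sub_sub_comm]
  refine (norm_sub_le _ _).trans ((add_le_add b1 b2).trans_eq ?_)
  ring

lemma integral_kernel (N : ℕ) (hN : 0 < N) :
    ∫ x in (-N : ℝ)..(N + 1), ((2 * N / (x ^ 2 + N ^ 2) : ℝ) : ℂ) * I =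
      ((2 * (Real.arctan (1 + 1 / (N : ℝ)) + Real.pi / 4) : ℝ) : ℂ) * I := by
  have hN' : (0 : ℝ) < N := by exact_mod_cast hN
  rw [intervalIntegral.integral_mul_const, intervalIntegral.integral_ofReal]
  congr 2
  have hd (x : ℝ) (_ : x ∈ Set.uIcc (-N : ℝ) (N + 1)) :
      HasDerivAt (fun x : ℝ ↦ 2 * Real.arctan (x / N)) (2 * N / (x ^ 2 + N ^ 2)) x := by
    refine ((((hasDerivAt_id' x).div_const (N : ℝ)).arctan).const_mul 2).congr_deriv ?_
    field_simp
    ring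
  have hc : Continuous fun x : ℝ ↦ 2 * (N : ℝ) / (x ^ 2 + N ^ 2) := by
    have h (x : ℝ) : x ^ 2 + (N : ℝ) ^ 2 ≠ 0 := by positivity
    fun_prop (disch := exact h _)
  rw [intervalIntegral.integral_eq_sub_of_hasDerivAt hd (hc.intervalIntegrable _ _)]
  rw [neg_div, div_self hN'.ne', Real.arctan_neg, Real.arctan_one, add_div, div_self hN'.ne']
  ring

/-- Each of the `2N + 1` unit intervals `[m, m + 1]` contributes an error of at most `5 / N²`. -/
lemma norm_boundary_sum_sub_le (N : ℕ) (hN : 0 < N) :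
    ‖∑ k ∈ Finset.range (2 * N + 1),
        (1 / (1 / 3 - (k - N) - N * I) - 1 / (1 / 3 - (k - N) + (N + 1) * I) : ℂ) -
      ((2 * (Real.arctan (1 + 1 / (N : ℝ)) + Real.pi / 4) : ℝ) : ℂ) * I‖ ≤
      (2 * N + 1) * (5 / (N : ℝ) ^ 2) := by
  have hN' : (0 : ℝ) < N := by exact_mod_cast hN
  have hc : Continuous fun x : ℝ ↦ ((2 * N / (x ^ 2 + N ^ 2) : ℝ) : ℂ) * I := by
    have h (x : ℝ) : x ^ 2 + (N : ℝ) ^ 2 ≠ 0 := by positivity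
    fun_prop (disch := exact h _)
  have hs := intervalIntegral.sum_integral_adjacent_intervals (μ := MeasureTheory.volume)
    (a := fun k : ℕ ↦ (k - N : ℝ)) (n := 2 * N + 1) (fun k _ ↦ hc.intervalIntegrable _ _)
  rw [← integral_kernel N hN, show (-N : ℝ) = ((0 : ℕ) : ℝ) - N by simp,
    show (N + 1 : ℝ) = ((2 * N + 1 : ℕ) : ℝ) - N by push_cast; ring, ← hs,
    ← Finset.sum_sub_distrib]
  refine (norm_sum_le_of_le _ (n := fun _ ↦ 5 / (N : ℝ) ^ 2) fun k _ ↦ ?_).trans_eq (by simp)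
  have hlen : ((k + 1 : ℕ) - N : ℝ) = (k - N : ℝ) + 1 := by push_cast; ring
  simp only [hlen]
  set b : ℂ := 1 / (1 / 3 - (k - N) - N * I) - 1 / (1 / 3 - (k - N) + (N + 1) * I) with hb
  have hconst : b = ∫ _ in (k - N : ℝ)..(k - N : ℝ) + 1, b := by simp
  rw [hconst, ← intervalIntegral.integral_sub (by simp) (hc.intervalIntegrable _ _)]
  refine (intervalIntegral.norm_integral_le_of_norm_le_const (C := 5 / (N : ℝ) ^ 2)
    fun x hx ↦ ?_).trans_eq (by simp)
  rw [Set.uIoc_of_le (by linarith)] at hx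
  have := norm_boundary_sub_le N hN (k - N) x hx
  rw [hb]
  push_cast at this ⊢
  exact this

lemma tendsto_boundary_sum :
    Tendsto (fun N : ℕ ↦ ∑ k ∈ Finset.range (2 * N + 1),
      (1 / (1 / 3 - (k - N) - N * I) - 1 / (1 / 3 - (k - N) + (N + 1) * I) : ℂ))
      atTop (𝓝 (I * Real.pi)) := by
  have h0 : Tendsto (fun N : ℕ ↦ 1 / (N : ℝ)) atTop (𝓝 0) := tendsto_one_div_atTop_nhds_zero_nat
  have hmain : Tendsto (fun N : ℕ ↦
      ((2 * (Real.arctan (1 + 1 / (N : ℝ)) + Real.pi / 4) : ℝ) : ℂ) * I)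
      atTop (𝓝 (I * Real.pi)) := by
    have h1 : Tendsto (fun N : ℕ ↦ 2 * (Real.arctan (1 + 1 / (N : ℝ)) + Real.pi / 4)) atTop
        (𝓝 (2 * (Real.arctan (1 + 0) + Real.pi / 4))) :=
      (((Real.continuous_arctan.tendsto _).comp (h0.const_add 1)).add_const _).const_mul 2
    have h2 : 2 * (Real.arctan (1 + 0) + Real.pi / 4) = Real.pi := by
      rw [add_zero, Real.arctan_one]; ring
    rw [h2] at h1
    rw [mul_comm I]
    exact ((continuous_ofReal.tendsto _).comp h1).mul_const I
  have herr : Tendsto (fun N : ℕ ↦ (2 * N + 1) * (5 / (N : ℝ) ^ 2)) atTop (𝓝 0) := by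
    have h1 : Tendsto (fun N : ℕ ↦ 10 * (1 / (N : ℝ)) + 5 * (1 / (N : ℝ)) ^ 2) atTop
        (𝓝 (10 * 0 + 5 * 0 ^ 2)) := (h0.const_mul 10).add ((h0.pow 2).const_mul 5)
    rw [show (10 * 0 + 5 * 0 ^ 2 : ℝ) = 0 by norm_num] at h1
    refine h1.congr' ?_
    filter_upwards [eventually_gt_atTop 0] with N hN
    have hN' : (0 : ℝ) < N := by exact_mod_cast hN
    field_simp
    ring
  have hdiff := squeeze_zero_norm' ((eventually_gt_atTop 0).mono norm_boundary_sum_sub_le) herr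
  simpa using hdiff.add hmain

/-- The integral of wp along the vertical path beta(t) = 1/3 + i t, t in [0,1], is i pi. -/
theorem integral_wp_beta :
    ∫ t in (0 : ℝ)..1, wp (1 / 3 + t * Complex.I) * Complex.I =
      Complex.I * (Real.pi : ℂ) := by
  have h := intervalIntegral.hasSum_intervalIntegral_of_summable_norm summable_norm_wpTerm
  rw [intervalIntegral.integral_congr fun t ht ↦ tsum_wpTerm ht] at h
  have h1 := h.comp tendsto_box
  refine tendsto_nhds_unique h1 (tendsto_boundary_sum.congr fun N ↦ ?_)
  exact (sum_box_integral N).symm
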